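/- For every set Γ of propositional formulas and every propositional formula A: Γ ⊢_MPC A if and only if Γ^w ⊢_S4 A^w. -/

import Mathlib

/-! ### Modal formulas -/

inductive MF : Type
  | atom : ℕ → MF
  | bot  : MF
  | and  : MF → MF → MF
  | or   : MF → MF → MF
  | imp  : MF → MF → MF
  | neg  : MF → MF
  | box  : MF → MF
  deriving DecidableEq

namespace MF

/-- The set of atoms occurring in a modal formula. -/
def atoms : MF → Set ℕ
  | atom n => {n}
  | bot => ∅
  | and A B => atoms A ∪ atoms B
  | or A B => atoms A ∪ atoms B
  | imp A B => atoms A ∪ atoms B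
  | neg A => atoms A
  | box A => atoms A

/-- A boolean valuation on modal formulas respecting the classical connectives
(boxed formulas and atoms are treated as arbitrary). -/
def Respects (v : MF → Bool) : Prop :=
  v bot = false ∧
  (∀ A B, v (and A B) = (v A && v B)) ∧
  (∀ A B, v (or A B) = (v A || v B)) ∧
  (∀ A B, v (imp A B) = (!(v A) || v B)) ∧
  (∀ A, v (neg A) = !(v A))

/-- Classical propositional tautology (in the modal language). -/
def IsTaut (A : MF) : Prop := ∀ v, Respects v → v A = true

end MF

/-- Hilbert-style provability in the normal modal logic `K` extended by the
axiom scheme `Ax`: classical tautologies, scheme K, the extra axioms,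
modus ponens and necessitation. -/
inductive Prv (Ax : MF → Prop) : MF → Prop
  | taut {A : MF} : MF.IsTaut A → Prv Ax A
  | axK {A B : MF} : Prv Ax ((MF.box (A.imp B)).imp ((MF.box A).imp (MF.box B)))
  | extra {A : MF} : Ax A → Prv Ax A
  | mp {A B : MF} : Prv Ax (A.imp B) → Prv Ax A → Prv Ax B
  | nec {A : MF} : Prv Ax A → Prv Ax A.box

/-- Scheme 4 : □A → □□A. -/
def Ax4 (A : MF) : Prop := ∃ B, A = (MF.box B).imp (MF.box (MF.box B))
/-- Scheme T : □A → A. -/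
def AxT (A : MF) : Prop := ∃ B, A = (MF.box B).imp B
/-- Scheme D : ¬□⊥. -/
def AxD (A : MF) : Prop := A = MF.neg (MF.box MF.bot)
/-- Löb's scheme L : □(□A→A) → □A. -/
def AxGL (A : MF) : Prop := ∃ B, A = (MF.box ((MF.box B).imp B)).imp (MF.box B)

def AxK4  : MF → Prop := Ax4
def AxKD4 : MF → Prop := fun A => Ax4 A ∨ AxD A
def AxS4  : MF → Prop := fun A => Ax4 A ∨ AxT A

def PrvK   : MF → Prop := Prv (fun _ => False)
def PrvK4  : MF → Prop := Prv AxK4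
def PrvKD4 : MF → Prop := Prv AxKD4
def PrvS4  : MF → Prop := Prv AxS4
def PrvGL  : MF → Prop := Prv AxGL

/-- Conjunction of a finite list of modal formulas (empty conjunction is ⊤ := ⊥→⊥). -/
def conjL (l : List MF) : MF := l.foldr MF.and (MF.imp MF.bot MF.bot)

/-- `ModalConseq Ax Γ A` : there are B₁,…,Bₙ ∈ Γ with ⊢ (B₁∧…∧Bₙ)→A in K + Ax. -/
def ModalConseq (Ax : MF → Prop) (Γ : Set MF) (A : MF) : Prop :=
  ∃ l : List MF, (∀ B ∈ l, B ∈ Γ) ∧ Prv Ax ((conjL l).imp A)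

/-! ### Annotated modal formulas and translations -/

/-- Modal formulas with every occurrence of □ annotated by a natural number. -/
inductive AMF : Type
  | atom : ℕ → AMF
  | bot  : AMF
  | and  : AMF → AMF → AMF
  | or   : AMF → AMF → AMF
  | imp  : AMF → AMF → AMF
  | neg  : AMF → AMF
  | box  : ℕ → AMF → AMF

namespace AMF

/-- Forget the annotations. -/
def erase : AMF → MF
  | atom n => .atom n
  | bot => .bot
  | and A B => .and (erase A) (erase B)
  | or A B => .or (erase A) (erase B)
  | imp A B => .imp (erase A) (erase B)
  | neg A => .neg (erase A)
  | box _ A => .box (erase A)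

/-- The list of all annotations occurring in an annotated formula. -/
def labels : AMF → List ℕ
  | atom _ => []
  | bot => []
  | and A B => labels A ++ labels B
  | or A B => labels A ++ labels B
  | imp A B => labels A ++ labels B
  | neg A => labels A
  | box n A => n :: labels A

/-- A translation is ordered when the number assigned to each box is strictly
greater than all numbers assigned to boxes in its scope. -/
def Ordered : AMF → Prop
  | atom _ => True
  | bot => True
  | and A B => Ordered A ∧ Ordered B
  | or A B => Ordered A ∧ Ordered B
  | imp A B => Ordered A ∧ Ordered B
  | neg A => Ordered A
  | box n A => Ordered A ∧ ∀ m ∈ labels A, m < n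

end AMF

/-- `conjQ q n` is the conjunction q₀ ∧ … ∧ q_n of the atoms `q i`. -/
def conjQ (q : ℕ → ℕ) : ℕ → MF
  | 0 => .atom (q 0)
  | n+1 => (conjQ q n).and (.atom (q (n+1)))

/-- The formula `A^t`: commutes with connectives and `(□B)^t = □(q₀∧…∧q_n → B^t)`
where `n` is the annotation on that box. -/
def AMF.trans (q : ℕ → ℕ) : AMF → MF
  | .atom n => .atom n
  | .bot => .bot
  | .and A B => (trans q A).and (trans q B)
  | .or A B => (trans q A).or (trans q B)
  | .imp A B => (trans q A).imp (trans q B)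
  | .neg A => (trans q A).neg
  | .box n A => .box ((conjQ q n).imp (trans q A))

/-! ### Kripke semantics -/

/-- Classical Kripke forcing for modal formulas. -/
def Forces {W : Type} (R : W → W → Prop) (V : ℕ → W → Prop) : W → MF → Prop
  | w, .atom n => V n w
  | _, .bot => False
  | w, .and A B => Forces R V w A ∧ Forces R V w B
  | w, .or A B => Forces R V w A ∨ Forces R V w B
  | w, .imp A B => Forces R V w A → Forces R V w B
  | w, .neg A => ¬ Forces R V w A
  | w, .box A => ∀ u, R w u → Forces R V u A

/-- Cluster equivalence: `x = y`, or `x R y` and `y R x`. -/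
def ClusterEq {W : Type} (R : W → W → Prop) (x y : W) : Prop :=
  x = y ∨ (R x y ∧ R y x)

/-- A transitive frame whose clusters form a tree and in which every cluster is
a single irreflexive point or a nonempty set of reflexive points. -/
structure TreeWithClusters {W : Type} (R : W → W → Prop) : Prop where
  trans : Transitive R
  rooted : ∃ r, ∀ x, ClusterEq R r x ∨ R r x
  treelike : ∀ x y z, R x z → R y z → (ClusterEq R x y ∨ R x y ∨ R y x)
  cluster_irrefl_singleton : ∀ x, ¬ R x x → ∀ y, ClusterEq R x y → y = x
  cluster_homog : ∀ x y, ClusterEq R x y → (R x x → R y y)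

/-! ### Expansions -/

/-- `Expansion A B` : `B ∈ E(A)`, the set of expansions of `A`. -/
inductive Expansion : MF → MF → Prop
  | atom (n) : Expansion (.atom n) (.atom n)
  | bot : Expansion .bot .bot
  | and {A B D E : MF} : Expansion A D → Expansion B E → Expansion (A.and B) (D.and E)
  | or {A B D E : MF} : Expansion A D → Expansion B E → Expansion (A.or B) (D.or E)
  | imp {A B D E : MF} : Expansion A D → Expansion B E → Expansion (A.imp B) (D.imp E)
  | neg {A D : MF} : Expansion A D → Expansion A.neg D.neg
  | box {A D : MF} (l : List MF) : Expansion A D → (∀ E ∈ l, Expansion A E) →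
      Expansion A.box (MF.box (l.foldr MF.or D))

/-! ### Propositional formulas and Visser-style natural deduction -/

inductive PF : Type
  | atom : ℕ → PF
  | bot  : PF
  | and  : PF → PF → PF
  | or   : PF → PF → PF
  | imp  : PF → PF → PF
  deriving DecidableEq

def PF.top : PF := .imp .bot .bot
def PF.neg (A : PF) : PF := A.imp .bot

/-- Natural deduction derivability from a set of assumptions.  `ef` switches
the ex falso rule on/off; `Rule` is an additional rule given as a relation
between a list of premises and a conclusion.  The base system (with `ef`
and no extra rule) is Visser's BPC: ∧/∨ intro and elim, →I (discharging),
ex falso, and the formalized rules; no modus ponens. -/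
inductive Deriv (ef : Prop) (Rule : List PF → PF → Prop) : Set PF → PF → Prop
  | hyp {Γ : Set PF} {A : PF} : A ∈ Γ → Deriv ef Rule Γ A
  | andI {Γ : Set PF} {A B : PF} : Deriv ef Rule Γ A → Deriv ef Rule Γ B → Deriv ef Rule Γ (A.and B)
  | andE1 {Γ : Set PF} {A B : PF} : Deriv ef Rule Γ (A.and B) → Deriv ef Rule Γ A
  | andE2 {Γ : Set PF} {A B : PF} : Deriv ef Rule Γ (A.and B) → Deriv ef Rule Γ B
  | orI1 {Γ : Set PF} {A B : PF} : Deriv ef Rule Γ A → Deriv ef Rule Γ (A.or B)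
  | orI2 {Γ : Set PF} {A B : PF} : Deriv ef Rule Γ B → Deriv ef Rule Γ (A.or B)
  | orE {Γ : Set PF} {A B C : PF} : Deriv ef Rule Γ (A.or B) → Deriv ef Rule (insert A Γ) C →
      Deriv ef Rule (insert B Γ) C → Deriv ef Rule Γ C
  | impI {Γ : Set PF} {A B : PF} : Deriv ef Rule (insert A Γ) B → Deriv ef Rule Γ (A.imp B)
  | exfalso {Γ : Set PF} {A : PF} : ef → Deriv ef Rule Γ .bot → Deriv ef Rule Γ A
  | fAndI {Γ : Set PF} {A B C : PF} : Deriv ef Rule Γ (A.imp B) → Deriv ef Rule Γ (A.imp C) →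
      Deriv ef Rule Γ (A.imp (B.and C))
  | fOrE {Γ : Set PF} {A B C : PF} : Deriv ef Rule Γ (A.imp C) → Deriv ef Rule Γ (B.imp C) →
      Deriv ef Rule Γ ((A.or B).imp C)
  | fTr {Γ : Set PF} {A B C : PF} : Deriv ef Rule Γ (A.imp B) → Deriv ef Rule Γ (B.imp C) →
      Deriv ef Rule Γ (A.imp C)
  | extra {Γ : Set PF} {ps : List PF} {c : PF} : Rule ps c → (∀ p ∈ ps, Deriv ef Rule Γ p) → Deriv ef Rule Γ c

/-- No extra rule. -/
def RuleNone : List PF → PF → Prop := fun _ _ => False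
/-- Rule C : from A and ¬A infer ⊥. -/
def RuleC : List PF → PF → Prop := fun ps c => ∃ A : PF, ps = [A, A.neg] ∧ c = .bot
/-- Rule R (modus ponens) : from A and A→B infer B. -/
def RuleR : List PF → PF → Prop := fun ps c => ∃ A B : PF, ps = [A, A.imp B] ∧ c = B
/-- Löb's rule L : from (A∧(A→B))→B infer A→B. -/
def RuleL : List PF → PF → Prop :=
  fun ps c => ∃ A B : PF, ps = [(A.and (A.imp B)).imp B] ∧ c = A.imp B
/-- Rule C' : from ⊤→⊥ infer ⊥. -/
def RuleC' : List PF → PF → Prop := fun ps c => ps = [PF.top.imp .bot] ∧ c = .bot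
/-- Rule R' : from ⊤→A infer A. -/
def RuleR' : List PF → PF → Prop := fun ps c => ∃ A : PF, ps = [PF.top.imp A] ∧ c = A
/-- Rule L' : from (⊤→A)→A infer ⊤→A. -/
def RuleL' : List PF → PF → Prop :=
  fun ps c => ∃ A : PF, ps = [(PF.top.imp A).imp A] ∧ c = PF.top.imp A

def BPC  : Set PF → PF → Prop := Deriv True RuleNone
def EBPC : Set PF → PF → Prop := Deriv True RuleC
def IPC  : Set PF → PF → Prop := Deriv True RuleR
def FPL  : Set PF → PF → Prop := Deriv True RuleL
def MPC  : Set PF → PF → Prop := Deriv False RuleR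

/-! ### BHK translations -/

/-- The BHK translation `b`. -/
def bhk : PF → MF
  | .atom n => .box (.atom n)
  | .bot => .box .bot
  | .and A B => (bhk A).and (bhk B)
  | .or A B => (bhk A).or (bhk B)
  | .imp A B => .box ((bhk A).imp (bhk B))

/-- The weak BHK translation `w`.  The propositional atom `n` is embedded as
the modal atom `n+1`, and the fresh atom `q` (not in the propositional
language) is the modal atom `0`; `⊥^w = □q`. -/
def wtr : PF → MF
  | .atom n => .box (.atom (n+1))
  | .bot => .box (.atom 0)
  | .and A B => (wtr A).and (wtr B)
  | .or A B => (wtr A).or (wtr B)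
  | .imp A B => .box ((wtr A).imp (wtr B))

/-! ### The cut-free sequent calculus G(KD4) -/

/-- Cut-free derivability in the sequent calculus G(KD4): axioms,
structural rules (weakening, contraction, exchange), two-sided rules for
∧, ∨, →, ¬, and the modal rules □₄R and □_D R. -/
inductive GKD4 : List MF → List MF → Prop
  | ax (A) : GKD4 [A] [A]
  | axBot : GKD4 [.bot] []
  | exL {Γ Γ' Δ : List MF} : GKD4 Γ Δ → Γ.Perm Γ' → GKD4 Γ' Δ
  | exR {Γ Δ Δ' : List MF} : GKD4 Γ Δ → Δ.Perm Δ' → GKD4 Γ Δ'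
  | wL {Γ Δ : List MF} (A : MF) : GKD4 Γ Δ → GKD4 (A :: Γ) Δ
  | wR {Γ Δ : List MF} (A : MF) : GKD4 Γ Δ → GKD4 Γ (A :: Δ)
  | cL {Γ Δ : List MF} {A : MF} : GKD4 (A :: A :: Γ) Δ → GKD4 (A :: Γ) Δ
  | cR {Γ Δ : List MF} {A : MF} : GKD4 Γ (A :: A :: Δ) → GKD4 Γ (A :: Δ)
  | andL1 {Γ Δ : List MF} {A B : MF} : GKD4 (A :: Γ) Δ → GKD4 (A.and B :: Γ) Δ
  | andL2 {Γ Δ : List MF} {A B : MF} : GKD4 (B :: Γ) Δ → GKD4 (A.and B :: Γ) Δ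
  | andR {Γ₀ Δ₀ Γ₁ Δ₁ : List MF} {A B : MF} : GKD4 Γ₀ (A :: Δ₀) → GKD4 Γ₁ (B :: Δ₁) →
      GKD4 (Γ₀ ++ Γ₁) (A.and B :: (Δ₀ ++ Δ₁))
  | orL {Γ₀ Δ₀ Γ₁ Δ₁ : List MF} {A B : MF} : GKD4 (A :: Γ₀) Δ₀ → GKD4 (B :: Γ₁) Δ₁ →
      GKD4 (A.or B :: (Γ₀ ++ Γ₁)) (Δ₀ ++ Δ₁)
  | orR1 {Γ Δ : List MF} {A B : MF} : GKD4 Γ (A :: Δ) → GKD4 Γ (A.or B :: Δ)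
  | orR2 {Γ Δ : List MF} {A B : MF} : GKD4 Γ (B :: Δ) → GKD4 Γ (A.or B :: Δ)
  | impL {Γ₀ Δ₀ Γ₁ Δ₁ : List MF} {A B : MF} : GKD4 Γ₀ (A :: Δ₀) → GKD4 (B :: Γ₁) Δ₁ →
      GKD4 (A.imp B :: (Γ₀ ++ Γ₁)) (Δ₀ ++ Δ₁)
  | impR {Γ Δ : List MF} {A B : MF} : GKD4 (A :: Γ) (B :: Δ) → GKD4 Γ (A.imp B :: Δ)
  | negL {Γ Δ : List MF} {A : MF} : GKD4 Γ (A :: Δ) → GKD4 (A.neg :: Γ) Δ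
  | negR {Γ Δ : List MF} {A : MF} : GKD4 (A :: Γ) Δ → GKD4 Γ (A.neg :: Δ)
  | box4R {Γ : List MF} {A : MF} : GKD4 (Γ ++ Γ.map MF.box) [A] → GKD4 (Γ.map MF.box) [MF.box A]
  | boxDR {Γ : List MF} : GKD4 (Γ ++ Γ.map MF.box) [] → GKD4 (Γ.map MF.box) []

/-- Disjunction of a finite list of propositional formulas (empty: ⊥). -/
def disjL : List PF → PF
  | [] => .bot
  | [A] => A
  | A :: B :: r => A.or (disjL (B :: r))

/-! ### Kripke semantics for MPC -/

/-- Intuitionistic (minimal) forcing, where `⊥` has its own upward-closed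
valuation `Vbot`. -/
def MForces {W : Type} (le : W → W → Prop) (V : ℕ → W → Prop) (Vbot : W → Prop) :
    W → PF → Prop
  | w, .atom n => V n w
  | w, .bot => Vbot w
  | w, .and A B => MForces le V Vbot w A ∧ MForces le V Vbot w B
  | w, .or A B => MForces le V Vbot w A ∨ MForces le V Vbot w B
  | w, .imp A B => ∀ u, le w u → MForces le V Vbot u A → MForces le V Vbot u B

/-- The S4 valuation induced by an MPC valuation: the fresh atom `q` (modal
atom 0) gets `V(⊥)`, and the propositional atom `n` (modal atom `n+1`) gets `V(n)`. -/
def shiftVal {W : Type} (V : ℕ → W → Prop) (Vbot : W → Prop) : ℕ → W → Prop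
  | 0 => Vbot
  | n+1 => V n

/-!
An S4 proof may use modal consequence like natural deduction, with one addition: every translated
formula implies its own box, so a conclusion drawn from translated assumptions can be boxed. Hence
`Γ^w ⊢ (A → B)^w` amounts to `Γ^w, A^w ⊢ B^w`, and each rule of MPC translates to a rule of S4.

For the converse, a persistent model of MPC is turned into an S4 model by letting `q` hold exactly
where `⊥` is forced; a world then forces `A^w` iff it forces `A`. Soundness of S4 on preorders
transfers a modal consequence to all models of MPC, and MPC is complete for these by the canonical
model of prime theories.
-/

namespace MF.Respects

variable {v : MF → Bool} {A B : MF}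

theorem and_iff (hv : Respects v) : v (A.and B) = true ↔ v A = true ∧ v B = true := by
  rw [hv.2.1, Bool.and_eq_true]

theorem or_iff (hv : Respects v) : v (A.or B) = true ↔ v A = true ∨ v B = true := by
  rw [hv.2.2.1, Bool.or_eq_true]

theorem imp_iff (hv : Respects v) : v (A.imp B) = true ↔ (v A = true → v B = true) := by
  rw [hv.2.2.2.1]
  cases v A <;> simp

theorem conjL_iff (hv : Respects v) (l : List MF) :
    v (conjL l) = true ↔ ∀ B ∈ l, v B = true := by
  induction l with
  | nil => simp [conjL, hv.imp_iff]
  | cons B l ih => rw [List.forall_mem_cons, ← ih]; exact hv.and_iff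

end MF.Respects

namespace ModalConseq

variable {Ax : MF → Prop} {G H : Set MF} {A B C : MF}

theorem of_prv (h : Prv Ax A) : ModalConseq Ax G A := by
  refine ⟨[], by simp, .mp (.taut fun v hv => ?_) h⟩
  simp only [hv.imp_iff]
  tauto

theorem of_isTaut (h : A.IsTaut) : ModalConseq Ax G A := of_prv (.taut h)

theorem hyp (h : A ∈ G) : ModalConseq Ax G A := by
  refine ⟨[A], by simpa using h, .taut fun v hv => ?_⟩
  simp [hv.imp_iff, hv.conjL_iff]

theorem mono (hGH : G ⊆ H) (h : ModalConseq Ax G A) : ModalConseq Ax H A :=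
  let ⟨l, hl, hA⟩ := h
  ⟨l, fun B hB => hGH (hl B hB), hA⟩

theorem mp (hAB : ModalConseq Ax G (A.imp B)) (hA : ModalConseq Ax G A) : ModalConseq Ax G B := by
  obtain ⟨l, hl, hAB⟩ := hAB
  obtain ⟨l', hl', hA⟩ := hA
  refine ⟨l ++ l', List.forall_mem_append.2 ⟨hl, hl'⟩, .mp (.mp (.taut fun v hv => ?_) hAB) hA⟩
  simp only [hv.imp_iff, hv.conjL_iff, List.forall_mem_append]
  tauto

theorem imp_intro (h : ModalConseq Ax (insert A G) B) : ModalConseq Ax G (A.imp B) := by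
  obtain ⟨l, hl, hB⟩ := h
  refine ⟨l.filter (· ≠ A), fun C hC => ?_, .mp (.taut fun v hv => ?_) hB⟩
  · obtain ⟨hCl, hCA⟩ : C ∈ l ∧ C ≠ A := by simpa using hC
    exact (hl C hCl).resolve_left hCA
  · simp only [hv.imp_iff, hv.conjL_iff, List.mem_filter, decide_eq_true_eq]
    intro hlB hl hA
    refine hlB fun C hC => ?_
    by_cases hCA : C = A
    · exact hCA ▸ hA
    · exact hl C ⟨hC, hCA⟩

theorem imp_iff : ModalConseq Ax G (A.imp B) ↔ ModalConseq Ax (insert A G) B :=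
  ⟨fun h => (h.mono (Set.subset_insert A G)).mp (hyp (Set.mem_insert A G)), imp_intro⟩

theorem and_intro (hA : ModalConseq Ax G A) (hB : ModalConseq Ax G B) :
    ModalConseq Ax G (A.and B) := by
  refine ((of_isTaut fun v hv => ?_).mp hA).mp hB
  simp only [hv.imp_iff, hv.and_iff]
  tauto

theorem and_left (h : ModalConseq Ax G (A.and B)) : ModalConseq Ax G A := by
  refine (of_isTaut fun v hv => ?_).mp h
  simp only [hv.imp_iff, hv.and_iff]
  tauto

theorem and_right (h : ModalConseq Ax G (A.and B)) : ModalConseq Ax G B := by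
  refine (of_isTaut fun v hv => ?_).mp h
  simp only [hv.imp_iff, hv.and_iff]
  tauto

theorem or_inl (h : ModalConseq Ax G A) : ModalConseq Ax G (A.or B) := by
  refine (of_isTaut fun v hv => ?_).mp h
  simp only [hv.imp_iff, hv.or_iff]
  tauto

theorem or_inr (h : ModalConseq Ax G B) : ModalConseq Ax G (A.or B) := by
  refine (of_isTaut fun v hv => ?_).mp h
  simp only [hv.imp_iff, hv.or_iff]
  tauto

theorem or_elim (h : ModalConseq Ax G (A.or B)) (hA : ModalConseq Ax (insert A G) C)
    (hB : ModalConseq Ax (insert B G) C) : ModalConseq Ax G C := by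
  refine (((of_isTaut fun v hv => ?_).mp h).mp hA.imp_intro).mp hB.imp_intro
  simp only [hv.imp_iff, hv.or_iff]
  tauto

theorem box_of_isTaut (h : A.IsTaut) : ModalConseq Ax G A.box := of_prv (.nec (.taut h))

theorem box_mp (hAB : ModalConseq Ax G (A.imp B).box) (hA : ModalConseq Ax G A.box) :
    ModalConseq Ax G B.box :=
  ((of_prv .axK).mp hAB).mp hA

theorem box_and_intro (hA : ModalConseq Ax G A.box) (hB : ModalConseq Ax G B.box) :
    ModalConseq Ax G (A.and B).box := by
  refine ((box_of_isTaut fun v hv => ?_).box_mp hA).box_mp hB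
  simp only [hv.imp_iff, hv.and_iff]
  tauto

theorem box_or_inl (h : ModalConseq Ax G A.box) : ModalConseq Ax G (A.or B).box := by
  refine (box_of_isTaut fun v hv => ?_).box_mp h
  simp only [hv.imp_iff, hv.or_iff]
  tauto

theorem box_or_inr (h : ModalConseq Ax G B.box) : ModalConseq Ax G (A.or B).box := by
  refine (box_of_isTaut fun v hv => ?_).box_mp h
  simp only [hv.imp_iff, hv.or_iff]
  tauto

theorem box_conjL {l : List MF} (hl : ∀ B ∈ l, ModalConseq Ax G B.box) :
    ModalConseq Ax G (conjL l).box := by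
  induction l with
  | nil => exact box_of_isTaut fun v hv => by simp [hv.conjL_iff]
  | cons B l ih =>
    rw [List.forall_mem_cons] at hl
    exact hl.1.box_and_intro (ih hl.2)

theorem of_box (hT : AxT ≤ Ax) (h : ModalConseq Ax G A.box) : ModalConseq Ax G A :=
  (of_prv (.extra (hT _ ⟨A, rfl⟩))).mp h

end ModalConseq

/-- The formula `A` is persistent over the logic `K + Ax` if the logic proves `A → □A`; stated as
a consequence from `{A}`, so that the rules of modal consequence apply to it directly. -/
def MF.Persistent (Ax : MF → Prop) (A : MF) : Prop := ModalConseq Ax {A} A.box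

namespace MF.Persistent

variable {Ax : MF → Prop} {G : Set MF} {A B : MF}

theorem box_of_conseq (hA : A.Persistent Ax) (h : ModalConseq Ax G A) :
    ModalConseq Ax G A.box := by
  have hA_box : ModalConseq Ax ∅ (A.imp A.box) := .imp_intro (by rwa [insert_empty_eq])
  exact (hA_box.mono (Set.empty_subset G)).mp h

theorem box (h4 : Ax4 ≤ Ax) (A : MF) : A.box.Persistent Ax :=
  (ModalConseq.of_prv (.extra (h4 _ ⟨A, rfl⟩))).mp (.hyp rfl)

theorem and (hA : A.Persistent Ax) (hB : B.Persistent Ax) : (A.and B).Persistent Ax :=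
  have hAB : ModalConseq Ax {A.and B} (A.and B) := .hyp rfl
  (hA.box_of_conseq hAB.and_left).box_and_intro (hB.box_of_conseq hAB.and_right)

theorem or (hA : A.Persistent Ax) (hB : B.Persistent Ax) : (A.or B).Persistent Ax :=
  ModalConseq.or_elim (.hyp rfl)
    (hA.box_of_conseq (.hyp (Set.mem_insert _ _))).box_or_inl
    (hB.box_of_conseq (.hyp (Set.mem_insert _ _))).box_or_inr

theorem wtr (h4 : Ax4 ≤ Ax) (A : PF) : (wtr A).Persistent Ax := by
  induction A with
  | atom _ | bot | imp _ _ _ _ => exact box h4 _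
  | and _ _ hA hB => exact hA.and hB
  | or _ _ hA hB => exact hA.or hB

end MF.Persistent

theorem ModalConseq.nec {Ax : MF → Prop} {G : Set MF} {A : MF} (hG : ∀ B ∈ G, B.Persistent Ax)
    (h : ModalConseq Ax G A) : ModalConseq Ax G A.box := by
  obtain ⟨l, hl, hA⟩ := h
  have hl_box : ModalConseq Ax G (conjL l).box :=
    box_conjL fun B hB => (hG B (hl B hB)).box_of_conseq (.hyp (hl B hB))
  exact (of_prv (.nec hA)).box_mp hl_box

theorem modalConseq_wtr_imp_iff {Ax : MF → Prop} (hS4 : AxS4 ≤ Ax) {Γ : Set PF} {A B : PF} :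
    ModalConseq Ax (wtr '' Γ) (wtr (A.imp B)) ↔ ModalConseq Ax (wtr '' insert A Γ) (wtr B) := by
  have persistent : ∀ C ∈ wtr '' Γ, C.Persistent Ax := by
    rintro _ ⟨C, -, rfl⟩
    exact .wtr (fun D hD => hS4 D (.inl hD)) C
  rw [Set.image_insert_eq, ← ModalConseq.imp_iff]
  exact ⟨.of_box fun D hD => hS4 D (.inr hD), .nec persistent⟩

theorem MPC.modalConseq_wtr {Ax : MF → Prop} (hS4 : AxS4 ≤ Ax) {Γ : Set PF} {A : PF}
    (h : MPC Γ A) : ModalConseq Ax (wtr '' Γ) (wtr A) := by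
  have insert_mono {Γ : Set PF} (A B : PF) : wtr '' insert A Γ ⊆ wtr '' insert A (insert B Γ) :=
    Set.image_mono (Set.insert_subset_insert (Set.subset_insert B Γ))
  induction h with
  | hyp h => exact .hyp (Set.mem_image_of_mem wtr h)
  | andI _ _ hA hB => exact hA.and_intro hB
  | andE1 _ h => exact h.and_left
  | andE2 _ h => exact h.and_right
  | orI1 _ h => exact h.or_inl
  | orI2 _ h => exact h.or_inr
  | orE _ _ _ h hA hB =>
    rw [Set.image_insert_eq] at hA hB
    exact h.or_elim hA hB
  | impI _ h => exact (modalConseq_wtr_imp_iff hS4).2 h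
  | exfalso ef => exact ef.elim
  | fAndI _ _ hB hC =>
    rw [modalConseq_wtr_imp_iff hS4] at hB hC ⊢
    exact hB.and_intro hC
  | fOrE _ _ hA hB =>
    rw [modalConseq_wtr_imp_iff hS4] at hA hB ⊢
    refine .or_elim (.hyp (Set.mem_image_of_mem wtr (Set.mem_insert _ _))) ?_ ?_ <;>
      rw [← Set.image_insert_eq]
    · exact hA.mono (insert_mono _ _)
    · exact hB.mono (insert_mono _ _)
  | @fTr Γ A B C _ _ hAB hBC =>
    rw [modalConseq_wtr_imp_iff hS4] at hAB hBC ⊢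
    rw [Set.image_insert_eq, ← ModalConseq.imp_iff] at hBC
    exact (hBC.mono (Set.image_mono (Set.subset_insert A Γ))).mp hAB
  | @extra _ _ B rule _ ih =>
    obtain ⟨A, _, rfl, rfl⟩ := rule
    have hA : ModalConseq Ax _ (wtr A) := ih A (by simp)
    have hAB : ModalConseq Ax _ (wtr (A.imp B)) := ih (A.imp B) (by simp)
    rw [modalConseq_wtr_imp_iff hS4, Set.image_insert_eq, ← ModalConseq.imp_iff] at hAB
    exact hAB.mp hA

section Soundness

variable {W : Type} {R : W → W → Prop} {V : ℕ → W → Prop} {Ax : MF → Prop} {A : MF}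

theorem MF.IsTaut.forces (h : A.IsTaut) (w : W) : Forces R V w A := by
  classical
  have respects : MF.Respects fun B => decide (Forces R V w B) := by
    refine ⟨decide_eq_false id, ?_, ?_, ?_, ?_⟩ <;> intros <;>
      simp only [← Bool.decide_and, ← Bool.decide_or, ← decide_not, decide_eq_decide] <;>
      simp only [Forces, imp_iff_not_or]
  simpa using h _ respects

theorem Prv.forces (hAx : ∀ B, Ax B → ∀ w, Forces R V w B) (h : Prv Ax A) (w : W) :
    Forces R V w A := by
  induction h generalizing w with
  | taut h => exact h.forces w
  | axK => exact fun hAB hA u hu => hAB u hu (hA u hu)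
  | extra h => exact hAx _ h w
  | mp _ _ hAB hA => exact hAB w (hA w)
  | nec _ hA => exact fun u _ => hA u

theorem forces_conjL_iff {w : W} {l : List MF} :
    Forces R V w (conjL l) ↔ ∀ B ∈ l, Forces R V w B := by
  induction l with
  | nil => simp [conjL, Forces]
  | cons B l ih => rw [List.forall_mem_cons, ← ih]; rfl

theorem ModalConseq.forces {G : Set MF} (hAx : ∀ B, Ax B → ∀ w, Forces R V w B)
    (h : ModalConseq Ax G A) {w : W} (hG : ∀ B ∈ G, Forces R V w B) : Forces R V w A :=
  let ⟨_, hl, hA⟩ := h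
  hA.forces hAx w (forces_conjL_iff.2 fun B hB => hG B (hl B hB))

end Soundness

section PersistentModels

variable {W : Type} [Preorder W] {V : ℕ → W → Prop}

theorem AxS4.forces {A : MF} (h : AxS4 A) (w : W) : Forces (· ≤ ·) V w A := by
  rcases h with ⟨B, rfl⟩ | ⟨B, rfl⟩
  · exact fun hB u hwu x hux => hB x (hwu.trans hux)
  · exact fun hB => hB w le_rfl

theorem forces_box_atom_iff {n : ℕ} (hV : Monotone (V n)) {w : W} :
    Forces (· ≤ ·) V w (.box (.atom n)) ↔ V n w :=
  ⟨fun h => h w le_rfl, fun h _ hwu => hV hwu h⟩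

theorem forces_wtr_iff {Vbot : W → Prop} (hV : ∀ n, Monotone (V n)) (hVbot : Monotone Vbot)
    (A : PF) (w : W) :
    Forces (· ≤ ·) (shiftVal V Vbot) w (wtr A) ↔ MForces (· ≤ ·) V Vbot w A := by
  induction A generalizing w with
  | atom n => exact forces_box_atom_iff (hV n)
  | bot => exact forces_box_atom_iff hVbot
  | and _ _ hA hB => exact and_congr (hA w) (hB w)
  | or _ _ hA hB => exact or_congr (hA w) (hB w)
  | imp _ _ hA hB => exact forall₂_congr fun u _ => imp_congr (hA u) (hB u)

end PersistentModels

/-- Semantic consequence of minimal logic: in every preordered Kripke model with persistent atoms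
and persistent `⊥`, each world forcing `Γ` forces `A`. -/
def KripkeConseq (Γ : Set PF) (A : PF) : Prop :=
  ∀ (W : Type) [Preorder W] (V : ℕ → W → Prop) (Vbot : W → Prop),
    (∀ n, Monotone (V n)) → Monotone Vbot →
      ∀ w, (∀ B ∈ Γ, MForces (· ≤ ·) V Vbot w B) → MForces (· ≤ ·) V Vbot w A

theorem ModalConseq.kripkeConseq {Γ : Set PF} {A : PF}
    (h : ModalConseq AxS4 (wtr '' Γ) (wtr A)) : KripkeConseq Γ A := by
  intro W _ V Vbot hV hVbot w hΓ
  rw [← forces_wtr_iff hV hVbot]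
  refine h.forces (fun _ hB => hB.forces) ?_
  rintro _ ⟨B, hB, rfl⟩
  exact (forces_wtr_iff hV hVbot B w).2 (hΓ B hB)

namespace Deriv

variable {ef : Prop} {Rule : List PF → PF → Prop} {Γ Δ : Set PF} {A B : PF}

theorem mono (hΓΔ : Γ ⊆ Δ) (h : Deriv ef Rule Γ A) : Deriv ef Rule Δ A := by
  induction h generalizing Δ with
  | hyp h => exact .hyp (hΓΔ h)
  | andI _ _ hA hB => exact .andI (hA hΓΔ) (hB hΓΔ)
  | andE1 _ h => exact .andE1 (h hΓΔ)
  | andE2 _ h => exact .andE2 (h hΓΔ)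
  | orI1 _ h => exact .orI1 (h hΓΔ)
  | orI2 _ h => exact .orI2 (h hΓΔ)
  | orE _ _ _ h hA hB =>
    exact .orE (h hΓΔ) (hA (Set.insert_subset_insert hΓΔ)) (hB (Set.insert_subset_insert hΓΔ))
  | impI _ h => exact .impI (h (Set.insert_subset_insert hΓΔ))
  | exfalso ef _ h => exact .exfalso ef (h hΓΔ)
  | fAndI _ _ hB hC => exact .fAndI (hB hΓΔ) (hC hΓΔ)
  | fOrE _ _ hA hB => exact .fOrE (hA hΓΔ) (hB hΓΔ)
  | fTr _ _ hAB hBC => exact .fTr (hAB hΓΔ) (hBC hΓΔ)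
  | extra rule _ ih => exact .extra rule fun p hp => ih p hp hΓΔ

/-- Eliminating `B ∨ B` acts as a cut even where `Rule` does not contain modus ponens. -/
theorem cut (hB : Deriv ef Rule Γ B) (hA : Deriv ef Rule (insert B Γ) A) : Deriv ef Rule Γ A :=
  .orE (.orI1 hB) hA hA

theorem mp (hAB : Deriv ef RuleR Γ (A.imp B)) (hA : Deriv ef RuleR Γ A) : Deriv ef RuleR Γ B :=
  .extra ⟨A, B, rfl, rfl⟩ (by simp [hAB, hA])

end Deriv

/-- Derivability from finitely many of the assumptions `Γ`; it coincides with derivability from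
`Γ`, see `Deriv.finitely`. -/
def FinitelyDeriv (ef : Prop) (Rule : List PF → PF → Prop) (Γ : Set PF) (A : PF) : Prop :=
  ∃ F ⊆ Γ, F.Finite ∧ Deriv ef Rule F A

namespace FinitelyDeriv

variable {ef : Prop} {Rule : List PF → PF → Prop} {Γ : Set PF} {A B C : PF}

theorem map (step : ∀ {F}, Deriv ef Rule F A → Deriv ef Rule F C)
    (h : FinitelyDeriv ef Rule Γ A) : FinitelyDeriv ef Rule Γ C :=
  let ⟨F, hFΓ, hF, hA⟩ := h
  ⟨F, hFΓ, hF, step hA⟩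

theorem map₂ (step : ∀ {F}, Deriv ef Rule F A → Deriv ef Rule F B → Deriv ef Rule F C)
    (hA : FinitelyDeriv ef Rule Γ A) (hB : FinitelyDeriv ef Rule Γ B) :
    FinitelyDeriv ef Rule Γ C :=
  let ⟨F, hFΓ, hF, hA⟩ := hA
  let ⟨F', hFΓ', hF', hB⟩ := hB
  ⟨F ∪ F', Set.union_subset hFΓ hFΓ', hF.union hF',
    step (hA.mono Set.subset_union_left) (hB.mono Set.subset_union_right)⟩

theorem discharge (h : FinitelyDeriv ef Rule (insert A Γ) B) :
    ∃ F ⊆ Γ, F.Finite ∧ Deriv ef Rule (insert A F) B :=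
  let ⟨F, hFΓ, hF, hB⟩ := h
  ⟨F \ {A}, Set.sdiff_singleton_subset_iff.2 hFΓ, hF.sdiff,
    hB.mono (Set.subset_insert_sdiff_singleton A F)⟩

theorem imp_intro (h : FinitelyDeriv ef Rule (insert A Γ) B) :
    FinitelyDeriv ef Rule Γ (A.imp B) :=
  let ⟨F, hFΓ, hF, hB⟩ := h.discharge
  ⟨F, hFΓ, hF, .impI hB⟩

theorem or_elim (h : FinitelyDeriv ef Rule Γ (A.or B))
    (hA : FinitelyDeriv ef Rule (insert A Γ) C) (hB : FinitelyDeriv ef Rule (insert B Γ) C) :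
    FinitelyDeriv ef Rule Γ C := by
  obtain ⟨F, hFΓ, hF, hAB⟩ := h
  obtain ⟨F₁, hFΓ₁, hF₁, hA⟩ := hA.discharge
  obtain ⟨F₂, hFΓ₂, hF₂, hB⟩ := hB.discharge
  refine ⟨F ∪ (F₁ ∪ F₂), Set.union_subset hFΓ (Set.union_subset hFΓ₁ hFΓ₂),
    hF.union (hF₁.union hF₂), .orE (hAB.mono Set.subset_union_left) (hA.mono ?_) (hB.mono ?_)⟩ <;>
  · apply Set.insert_subset_insert
    grind

theorem extra {ps : List PF} (rule : Rule ps C) (h : ∀ p ∈ ps, FinitelyDeriv ef Rule Γ p) :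
    FinitelyDeriv ef Rule Γ C := by
  choose! F hFΓ hF hp using h
  exact ⟨⋃ p ∈ ps, F p, Set.iUnion₂_subset hFΓ, ps.finite_toSet.biUnion hF,
    .extra rule fun p hps => (hp p hps).mono (Set.subset_biUnion_of_mem (u := F) hps)⟩

end FinitelyDeriv

theorem Deriv.finitely {ef : Prop} {Rule : List PF → PF → Prop} {Γ : Set PF} {A : PF}
    (h : Deriv ef Rule Γ A) : FinitelyDeriv ef Rule Γ A := by
  induction h with
  | @hyp Γ A h => exact ⟨{A}, Set.singleton_subset_iff.2 h, Set.finite_singleton A, .hyp rfl⟩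
  | andI _ _ hA hB => exact hA.map₂ .andI hB
  | andE1 _ h => exact h.map .andE1
  | andE2 _ h => exact h.map .andE2
  | orI1 _ h => exact h.map .orI1
  | orI2 _ h => exact h.map .orI2
  | orE _ _ _ h hA hB => exact h.or_elim hA hB
  | impI _ h => exact h.imp_intro
  | exfalso ef _ h => exact h.map (.exfalso ef)
  | fAndI _ _ hB hC => exact hB.map₂ .fAndI hC
  | fOrE _ _ hA hB => exact hA.map₂ .fOrE hB
  | fTr _ _ hAB hBC => exact hAB.map₂ .fTr hBC
  | extra rule _ ih => exact .extra rule ih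

/-- A prime theory of `Deriv ef Rule`: a deductively closed set of formulas with the disjunction
property. It need not be consistent: the set of all formulas is one, as suits minimal logic. -/
structure IsPrimeTheory (ef : Prop) (Rule : List PF → PF → Prop) (T : Set PF) : Prop where
  mem_of_deriv : ∀ {A}, Deriv ef Rule T A → A ∈ T
  mem_or_mem : ∀ {A B}, A.or B ∈ T → A ∈ T ∨ B ∈ T

/-- The worlds of the canonical model: prime theories, ordered by inclusion. -/
abbrev PrimeTheory (ef : Prop) (Rule : List PF → PF → Prop) : Type :=
  {T : Set PF // IsPrimeTheory ef Rule T}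

section Lindenbaum

variable {ef : Prop} {Rule : List PF → PF → Prop} {Γ T : Set PF} {A : PF}

theorem exists_maximal_not_deriv (h : ¬ Deriv ef Rule Γ A) :
    ∃ T, Γ ⊆ T ∧ Maximal (fun T => ¬ Deriv ef Rule T A) T := by
  refine zorn_subset_nonempty {T | ¬ Deriv ef Rule T A} (fun c hc hchain hne => ?_) Γ h
  refine ⟨⋃₀ c, fun hA => ?_, fun _ => Set.subset_sUnion_of_mem⟩
  obtain ⟨F, hFc, hF, hA⟩ := hA.finitely
  obtain ⟨T, hT, hFT⟩ :=
    DirectedOn.exists_mem_subset_of_finite_of_subset_sUnion hne hchain.directedOn hF hFc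
  exact hc hT (hA.mono hFT)

theorem isPrimeTheory_of_maximal_not_deriv (hT : Maximal (fun T => ¬ Deriv ef Rule T A) T) :
    IsPrimeTheory ef Rule T := by
  have deriv_insert {B : PF} (hB : B ∉ T) : Deriv ef Rule (insert B T) A := by
    by_contra hA
    exact hB (hT.le_of_ge hA (Set.subset_insert B T) (Set.mem_insert B T))
  constructor
  · intro B hB
    by_contra hBT
    exact hT.prop (hB.cut (deriv_insert hBT))
  · intro B C hBC
    by_contra! ⟨hB, hC⟩
    exact hT.prop (.orE (.hyp hBC) (deriv_insert hB) (deriv_insert hC))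

theorem exists_isPrimeTheory_notMem (h : ¬ Deriv ef Rule Γ A) :
    ∃ T, Γ ⊆ T ∧ IsPrimeTheory ef Rule T ∧ A ∉ T :=
  let ⟨T, hΓT, hT⟩ := exists_maximal_not_deriv h
  ⟨T, hΓT, isPrimeTheory_of_maximal_not_deriv hT, fun hA => hT.prop (.hyp hA)⟩

end Lindenbaum

namespace IsPrimeTheory

variable {ef : Prop} {Rule : List PF → PF → Prop} {T : Set PF} {A B : PF}

theorem and_mem_iff (hT : IsPrimeTheory ef Rule T) : A.and B ∈ T ↔ A ∈ T ∧ B ∈ T :=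
  ⟨fun h => ⟨hT.mem_of_deriv (.andE1 (.hyp h)), hT.mem_of_deriv (.andE2 (.hyp h))⟩,
    fun h => hT.mem_of_deriv (.andI (.hyp h.1) (.hyp h.2))⟩

theorem or_mem_iff (hT : IsPrimeTheory ef Rule T) : A.or B ∈ T ↔ A ∈ T ∨ B ∈ T :=
  ⟨hT.mem_or_mem, fun h => h.elim (fun hA => hT.mem_of_deriv (.orI1 (.hyp hA)))
    (fun hB => hT.mem_of_deriv (.orI2 (.hyp hB)))⟩

theorem imp_mem_iff (hT : IsPrimeTheory ef RuleR T) :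
    A.imp B ∈ T ↔ ∀ U, IsPrimeTheory ef RuleR U → T ⊆ U → A ∈ U → B ∈ U := by
  refine ⟨fun h U hU hTU hA => hU.mem_of_deriv (.mp (.hyp (hTU h)) (.hyp hA)), fun h => ?_⟩
  by_contra hAB
  have hB : ¬ Deriv ef RuleR (insert A T) B := fun hB => hAB (hT.mem_of_deriv (.impI hB))
  obtain ⟨U, hTU, hU, hBU⟩ := exists_isPrimeTheory_notMem hB
  obtain ⟨hAU, hTU⟩ := Set.insert_subset_iff.1 hTU
  exact hBU (h U hU hTU hAU)

end IsPrimeTheory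

theorem mforces_primeTheory_iff {ef : Prop} (A : PF) (T : PrimeTheory ef RuleR) :
    MForces (· ≤ ·) (fun n (U : PrimeTheory ef RuleR) => .atom n ∈ U.1) (fun U => .bot ∈ U.1) T A ↔
      A ∈ T.1 := by
  induction A generalizing T with
  | atom _ | bot => exact Iff.rfl
  | and _ _ hA hB => exact (and_congr (hA T) (hB T)).trans T.2.and_mem_iff.symm
  | or _ _ hA hB => exact (or_congr (hA T) (hB T)).trans T.2.or_mem_iff.symm
  | imp A B hA hB => simp only [MForces, hA, hB, T.2.imp_mem_iff, Subtype.forall]; rfl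

theorem KripkeConseq.mpc {Γ : Set PF} {A : PF} (h : KripkeConseq Γ A) : MPC Γ A := by
  by_contra hA
  obtain ⟨T, hΓT, hT, hAT⟩ := exists_isPrimeTheory_notMem hA
  refine hAT ((mforces_primeTheory_iff A ⟨T, hT⟩).1 (h _ _ _ ?_ ?_ _ fun B hB => ?_))
  · exact fun n S U hSU hS => hSU hS
  · exact fun S U hSU hS => hSU hS
  · exact (mforces_primeTheory_iff B ⟨T, hT⟩).2 (hΓT hB)

theorem stmt7 (Γ : Set PF) (A : PF) :
    MPC Γ A ↔ ModalConseq AxS4 (wtr '' Γ) (wtr A) :=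
  ⟨MPC.modalConseq_wtr le_rfl, fun h => h.kripkeConseq.mpc⟩
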